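/- arXiv:1812.11313 — 2 statements merged into one kernel-verified Lean document; each statement's English description precedes it below -/
import Mathlib

section
/- For p ∈ {2,3} and every integer k ≥ 2, the group C_p × C_p × C_{p^k} is not separable with respect to the class 𝒦_A of finite abelian groups; that is, there exists an S-ring over C_p × C_p × C_{p^k} admitting an algebraic isomorphism to an S-ring over a finite abelian group that is not induced by any combinatorial isomorphism. -/
/-!
An S-ring is encoded by a colouring `c` of a group whose fibres are the basic sets. Suppose two
colourings `c : U → κ`, `c' : U' → κ` of finite groups have the same structure constants, colour
by colour, but no map `F : U → U'` satisfies `c' (F b * (F a)⁻¹) = c (b * a⁻¹)` for all `a`, `b`.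
If `U` embeds into `G` and `U'` into an abelian group `H` of the same order, give all elements
outside the subgroup one additional colour. The structure constants of the extended colourings
still agree, so matching colours is an algebraic isomorphism of S-rings over `G` and `H`. A
combinatorial isomorphism inducing it, translated so as to fix the identity, would restrict to a
map `F` as above; hence it is not induced (`not_sep_of_colourings`).

For `p = 2`, take `U = C₂ × C₂ × C₄` with the 4 × 4 rook graph and `U' = C₄ × C₄` with the
Shrikhande graph. Both are strongly regular with the same parameters, but only the rook graph
contains a 4-clique (`no_rook_map`).

For `p = 3`, take `U = U' = C₃ × C₃ × C₉`. On the subgroup `C₃ × C₃ × 3C₉` and on its complement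
an element `(v, z)` is coloured, roughly, by the product of `z` with the value at `v` of an
anisotropic binary quadratic form over the field with three elements. The structure constants
do not see whether the same form is used in the two places (`plainCol`) or whether the second
one is sheared (`twistCol`), but a configuration of six points does (`no_twist_map`).

The finitely many structure constants are compared by kernel computation. To keep this cheap,
all the constants `c^Z_{X,Y}` for a fixed `Z` are packed into the base-`B` digits of one natural
number (`packedCounts`).
-/

open scoped Pointwise

namespace SRingPaper

/-- The number of representations of `z` as `x * y` with `x ∈ X`, `y ∈ Y`
(the structure constant `c^Z_{X,Y}` evaluated at `z ∈ Z`). -/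
noncomputable def structConst {G : Type*} [Group G] (X Y : Set G) (z : G) : ℕ :=
  Nat.card {p : G × G // p.1 ∈ X ∧ p.2 ∈ Y ∧ p.1 * p.2 = z}

/-- An S-ring (Schur ring) over a finite group `G`, given by its partition of `G`
into basic sets: the partition contains `{1}`, is closed under taking inverses,
and the structure constants are constant on each class (equivalently, the
ℤ-span of the indicator elements of the classes is a subring of ℤG). -/
structure SRing (G : Type*) [Group G] [Finite G] where
  parts : Set (Set G)
  nonempty_mem : ∀ X ∈ parts, X.Nonempty
  exists_mem : ∀ g : G, ∃ X ∈ parts, g ∈ X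
  eq_of_mem : ∀ X ∈ parts, ∀ Y ∈ parts, ∀ g : G, g ∈ X → g ∈ Y → X = Y
  one_mem : ({1} : Set G) ∈ parts
  inv_mem : ∀ X ∈ parts, X⁻¹ ∈ parts
  structConst_const : ∀ X ∈ parts, ∀ Y ∈ parts, ∀ Z ∈ parts, ∀ z ∈ Z, ∀ z' ∈ Z,
    structConst X Y z = structConst X Y z'

/-- `R(X) = {(g, x*g) : x ∈ X, g ∈ G}`, the edge set of the Cayley graph `Cay(G,X)`. -/
def RSet {G : Type*} [Group G] (X : Set G) : Set (G × G) :=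
  {p | ∃ x ∈ X, p.2 = x * p.1}

/-- The image of a binary relation under a map applied to both coordinates. -/
def mapRel {G G' : Type*} (f : G → G') (R : Set (G × G)) : Set (G' × G') :=
  (fun p : G × G => (f p.1, f p.2)) '' R

section Defs

variable {G G' : Type*} [Group G] [Finite G] [Group G'] [Finite G']

/-- A combinatorial isomorphism from the S-ring `A` to the S-ring `B`. -/
structure IsIso (A : SRing G) (B : SRing G') (f : G → G') : Prop where
  bijective : Function.Bijective f
  image_eq : (fun X : Set G => mapRel f (RSet X)) '' A.parts = RSet '' B.parts

/-- An algebraic isomorphism from the S-ring `A` to the S-ring `B`: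
a bijection between the basic sets preserving all structure constants. -/
structure IsAlgIso (A : SRing G) (B : SRing G') (φ : Set G → Set G') : Prop where
  bijOn : Set.BijOn φ A.parts B.parts
  structConst_eq : ∀ X ∈ A.parts, ∀ Y ∈ A.parts, ∀ Z ∈ A.parts,
    ∀ z ∈ Z, ∀ z' ∈ φ Z, structConst X Y z = structConst (φ X) (φ Y) z'

/-- The algebraic isomorphism `φ` is induced by the combinatorial isomorphism `f`
(i.e. `φ = φ_f`). -/
def InducedBy (A : SRing G) (φ : Set G → Set G') (f : G → G') : Prop :=
  Function.Bijective f ∧ ∀ X ∈ A.parts, mapRel f (RSet X) = RSet (φ X)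

/-- `A` is separable with respect to the class `𝒦_A` of finite abelian groups. -/
def SepAbelian (A : SRing G) : Prop :=
  ∀ (H : Type*) [CommGroup H] [Finite H] (B : SRing H) (φ : Set G → Set H),
    IsAlgIso A B φ → ∃ f : G → H, InducedBy A φ f

/-- `A` is separable with respect to the class `𝒦_C` of finite cyclic groups. -/
def SepCyclic (A : SRing G) : Prop :=
  ∀ (H : Type*) [Group H] [Finite H], IsCyclic H → ∀ (B : SRing H) (φ : Set G → Set H),
    IsAlgIso A B φ → ∃ f : G → H, InducedBy A φ f

/-- `A` is schurian: `A = V(K, G)` for some group `K` with `G_right ≤ K ≤ Sym(G)`,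
i.e. the basic sets of `A` are the orbits on `G` of the stabilizer of `1` in `K`. -/
def IsSchurian (A : SRing G) : Prop :=
  ∃ K : Subgroup (Equiv.Perm G),
    (∀ g : G, Equiv.mulRight g ∈ K) ∧
    A.parts = {X : Set G | ∃ g : G, X = {h : G | ∃ f ∈ K, f 1 = 1 ∧ f g = h}}

lemma mapRel_comp {A B C : Type*} (f : B → C) (g : A → B) (R : Set (A × A)) :
    mapRel (f ∘ g) R = mapRel f (mapRel g R) := by
  simp only [mapRel, Set.image_image]
  rfl

lemma mapRel_id {A : Type*} (R : Set (A × A)) : mapRel (fun x => x) R = R := by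
  simp [mapRel]

/-- The automorphism group `Aut(A)` of an S-ring, as a subgroup of `Sym(G)`. -/
def autSubgroup (A : SRing G) : Subgroup (Equiv.Perm G) where
  carrier := {f : Equiv.Perm G | ∀ X ∈ A.parts, mapRel f (RSet X) = RSet X}
  one_mem' := by
    intro X hX
    have h : ⇑(1 : Equiv.Perm G) = fun x => x := rfl
    rw [h, mapRel_id]
  mul_mem' := by
    intro f g hf hg X hX
    have h : ⇑(f * g) = ⇑f ∘ ⇑g := rfl
    rw [h, mapRel_comp, hg X hX, hf X hX]
  inv_mem' := by
    intro f hf X hX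
    conv_lhs => rw [← hf X hX]
    rw [← mapRel_comp]
    have h : ⇑f⁻¹ ∘ ⇑f = fun x => x := by
      funext x
      simp
    rw [h, mapRel_id]

/-- `A` is a normal S-ring: `G_right` is normal in `Aut(A)`. -/
def IsNormalSRing (A : SRing G) : Prop :=
  ∀ f ∈ autSubgroup A, ∀ g : G,
    ∃ g' : G, f * (Equiv.mulRight g : Equiv.Perm G) * f⁻¹ = Equiv.mulRight g'

/-- The partition of `G` into the orbits of `K ≤ Aut(G)`: the basic sets of the
cyclotomic S-ring `cyc(K, G)`. -/
def cycParts (K : Subgroup (MulAut G)) : Set (Set G) :=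
  {X : Set G | ∃ g : G, X = {h : G | ∃ f ∈ K, f g = h}}

/-- `H` is an `A`-subgroup: `H` is a union of basic sets of `A`. -/
def IsASubgroup (A : SRing G) (H : Subgroup G) : Prop :=
  ∀ X ∈ A.parts, X ⊆ (H : Set G) ∨ Disjoint X (H : Set G)

/-- `rad(X) = {g ∈ G : gX = Xg = X}`. -/
def radSet (X : Set G) : Set G :=
  {g : G | (fun x => g * x) '' X = X ∧ (fun x => x * g) '' X = X}

/-- A subset of a cyclic group is highest if it contains a generator. -/
def IsHighest (X : Set G) : Prop :=
  ∃ x ∈ X, ∀ g : G, g ∈ Subgroup.zpowers x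

/-- `A` is the `S`-wreath product with respect to the section `S = U/L`:
`U` and `L` are `A`-subgroups, `L ≤ U`, `L` is normal in `G`, and every basic
set outside `U` has `L` in its radical. -/
def IsSWreath (A : SRing G) (U L : Subgroup G) : Prop :=
  IsASubgroup A U ∧ IsASubgroup A L ∧ L ≤ U ∧ L.Normal ∧
    ∀ X ∈ A.parts, ¬ X ⊆ (U : Set G) → (L : Set G) ⊆ radSet X

/-- `AU` is the restriction `A_U` of `A` to the `A`-subgroup `U`. -/
def IsRestriction (A : SRing G) (U : Subgroup G) (AU : SRing ↥U) : Prop :=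
  AU.parts = {Y : Set ↥U | ∃ X ∈ A.parts, X ⊆ (U : Set G) ∧ Y = (Subtype.val ⁻¹' X : Set ↥U)}

/-- `AQ` is the quotient S-ring `A_{G/L}`. -/
def IsQuotientSRing (A : SRing G) (L : Subgroup G) [L.Normal] (AQ : SRing (G ⧸ L)) : Prop :=
  AQ.parts = {Y : Set (G ⧸ L) | ∃ X ∈ A.parts, Y = ((QuotientGroup.mk : G → G ⧸ L) '' X)}

/-- The orbit of a pair under a permutation group, for the definition of 2-equivalence. -/
def orb2 {Ω : Type*} (K : Subgroup (Equiv.Perm Ω)) (p : Ω × Ω) : Set (Ω × Ω) :=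
  {q : Ω × Ω | ∃ f ∈ K, (f p.1, f p.2) = q}

/-- Two permutation groups are 2-equivalent if they have the same orbits on `Ω × Ω`. -/
def TwoEquiv {Ω : Type*} (K K' : Subgroup (Equiv.Perm Ω)) : Prop :=
  {S : Set (Ω × Ω) | ∃ p, S = orb2 K p} = {S : Set (Ω × Ω) | ∃ p, S = orb2 K' p}

/-- A permutation group is 2-isolated if it is the only group 2-equivalent to it. -/
def TwoIsolated {Ω : Type*} (K : Subgroup (Equiv.Perm Ω)) : Prop :=
  ∀ K' : Subgroup (Equiv.Perm Ω), TwoEquiv K K' → K' = K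

end Defs

/-- `Aut(A)^S` for the section `S = G/N`: the permutations of `G/N` induced by
automorphisms of `A` permuting the `N`-cosets. -/
def inducedOnQuotient {G : Type*} [Group G] [Finite G] (A : SRing G) (N : Subgroup G)
    [N.Normal] : Set ((G ⧸ N) → (G ⧸ N)) :=
  {q : (G ⧸ N) → (G ⧸ N) | ∃ f : Equiv.Perm G, f ∈ autSubgroup A ∧
    (∀ u v : G, (u : G ⧸ N) = (v : G ⧸ N) → ((f u : G) : G ⧸ N) = ((f v : G) : G ⧸ N)) ∧
    ∀ u : G, q (u : G ⧸ N) = ((f u : G) : G ⧸ N)}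

end SRingPaper

namespace SRingPaper

/-! ### S-rings from colourings -/


section Colourings

/-- The number of `x` such that `x` has colour `i` and `x⁻¹ * g` has colour `j`. -/
noncomputable def colCount {G κ : Type*} [Group G] (col : G → κ) (i j : κ) (g : G) : ℕ :=
  Nat.card {x : G // (col x, col (x⁻¹ * g)) = (i, j)}

lemma structConst_fibre {G κ : Type*} [Group G] (col : G → κ) (i j : κ) (g : G) :
    structConst {x | col x = i} {x | col x = j} g = colCount col i j g := by
  refine Nat.card_congr
    { toFun := fun q => ⟨q.1.1, ?_⟩
      invFun := fun x => ⟨(x.1, x.1⁻¹ * g), ?_⟩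
      left_inv := ?_
      right_inv := fun x => rfl }
  · obtain ⟨⟨a, b⟩, ha, hb, hab⟩ := q
    simp only [Set.mem_ofPred_eq] at ha hb hab
    subst hab
    simp [ha, hb]
  · obtain ⟨x, hx⟩ := x
    simp only [Prod.mk.injEq] at hx
    exact ⟨hx.1, hx.2, by simp⟩
  · rintro ⟨⟨a, b⟩, ha, hb, hab⟩
    simp only at hab
    subst hab
    simp

/-- The S-ring whose basic sets are the non-empty fibres of a colouring. -/
def colSRing {G κ : Type*} [Group G] [Finite G] (col : G → κ)
    (h1 : ∀ g, col g = col 1 → g = 1)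
    (hinv : ∀ g h, col g = col h → col g⁻¹ = col h⁻¹)
    (hcnt : ∀ g h, col g = col h → ∀ i j, colCount col i j g = colCount col i j h) :
    SRing G where
  parts := {X | ∃ g, X = {x | col x = col g}}
  nonempty_mem := by
    rintro X ⟨g, rfl⟩
    exact ⟨g, rfl⟩
  exists_mem := fun g => ⟨_, ⟨g, rfl⟩, rfl⟩
  eq_of_mem := by
    rintro X ⟨a, rfl⟩ Y ⟨b, rfl⟩ g ha hb
    simp only [Set.mem_ofPred_eq] at ha hb
    rw [← ha, ← hb]
  one_mem := by
    refine ⟨1, ?_⟩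
    ext x
    exact ⟨fun h => by rw [Set.mem_singleton_iff.1 h]; rfl, fun h => h1 x h⟩
  inv_mem := by
    rintro X ⟨g, rfl⟩
    refine ⟨g⁻¹, ?_⟩
    ext x
    simp only [Set.mem_inv, Set.mem_ofPred_eq]
    exact ⟨fun h => by simpa using hinv _ _ h, fun h => by simpa using hinv _ _ h⟩
  structConst_const := by
    rintro X ⟨a, rfl⟩ Y ⟨b, rfl⟩ Z ⟨d, rfl⟩ z hz z' hz'
    rw [structConst_fibre, structConst_fibre]
    exact hcnt _ _ (hz.trans hz'.symm) _ _

/-- If two maps between finite types of equal cardinality have fibres of equal size over every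
point except possibly `k₀`, then the fibres over `k₀` have equal size too. -/
lemma card_fibre_eq_of_ne {α β K : Type*} [Finite α] [Finite β] [Finite K]
    (F : α → K) (F' : β → K) (k₀ : K) (hcard : Nat.card α = Nat.card β)
    (h : ∀ k, k ≠ k₀ → Nat.card {x // F x = k} = Nat.card {x // F' x = k}) :
    Nat.card {x // F x = k₀} = Nat.card {x // F' x = k₀} := by
  classical
  have := Fintype.ofFinite K
  have e1 : Nat.card α = ∑ k, Nat.card {x // F x = k} := by
    rw [← Nat.card_sigma]; exact Nat.card_congr (Equiv.sigmaFiberEquiv F).symm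
  have e2 : Nat.card β = ∑ k, Nat.card {x // F' x = k} := by
    rw [← Nat.card_sigma]; exact Nat.card_congr (Equiv.sigmaFiberEquiv F').symm
  rw [← Finset.add_sum_erase _ _ (Finset.mem_univ k₀)] at e1 e2
  have e3 : ∑ k ∈ Finset.univ.erase k₀, Nat.card {x // F x = k} =
      ∑ k ∈ Finset.univ.erase k₀, Nat.card {x // F' x = k} :=
    Finset.sum_congr rfl fun k hk => h k (Finset.ne_of_mem_erase hk)
  omega

end Colourings

/-! ### Extending a colouring of a subgroup -/

section Extension

variable {U G κ : Type*} [Group U] [Group G]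

open Classical in
/-- Extension of a colouring `c` of `U` along an embedding `ι : U → G`: elements outside the
image all get the additional colour `none`. -/
noncomputable def extCol (ι : U →* G) (c : U → κ) (g : G) : Option κ :=
  if h : ∃ u, ι u = g then some (c h.choose) else none

lemma extCol_apply {ι : U →* G} (hι : Function.Injective ι) (c : U → κ) (u : U) :
    extCol ι c (ι u) = some (c u) := by
  have h : ∃ v, ι v = ι u := ⟨u, rfl⟩
  rw [extCol, dif_pos h, hι h.choose_spec]

lemma extCol_eq_some {ι : U →* G} (hι : Function.Injective ι) {c : U → κ} {g : G} {i : κ} :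
    extCol ι c g = some i ↔ ∃ u, ι u = g ∧ c u = i := by
  constructor
  · intro h
    by_cases hg : ∃ u, ι u = g
    · obtain ⟨u, rfl⟩ := hg
      rw [extCol_apply hι] at h
      exact ⟨u, rfl, Option.some_injective _ h⟩
    · rw [extCol, dif_neg hg] at h
      cases h
  · rintro ⟨u, rfl, rfl⟩
    exact extCol_apply hι c u

lemma extCol_eq_none {ι : U →* G} (hι : Function.Injective ι) {c : U → κ} {g : G} :
    extCol ι c g = none ↔ g ∉ ι.range := by
  constructor
  · rintro h ⟨u, rfl⟩
    rw [extCol_apply hι] at h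
    cases h
  · intro h
    exact dif_neg h

/-- Counts at a point of the subgroup, for two colours of the subgroup. -/
lemma colCount_ext_mem {ι : U →* G} (hι : Function.Injective ι) (c : U → κ) (i j : κ) (u : U) :
    colCount (extCol ι c) (some i) (some j) (ι u) = colCount c i j u := by
  have hmem : ∀ x : {x : U // (c x, c (x⁻¹ * u)) = (i, j)},
      (extCol ι c (ι x.1), extCol ι c ((ι x.1)⁻¹ * ι u)) = (some i, some j) := by
    rintro ⟨x, hx⟩
    rw [← map_inv, ← map_mul, extCol_apply hι, extCol_apply hι]
    simp only [Prod.mk.injEq] at hx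
    simp [hx.1, hx.2]
  refine (Nat.card_congr (Equiv.ofBijective
    (fun x : {x : U // (c x, c (x⁻¹ * u)) = (i, j)} => ⟨ι x.1, hmem x⟩) ⟨?_, ?_⟩)).symm
  · intro x y h
    exact Subtype.ext (hι (Subtype.ext_iff.1 h))
  · rintro ⟨g, hg⟩
    simp only [Prod.mk.injEq] at hg
    obtain ⟨x, rfl, hx⟩ := (extCol_eq_some hι).1 hg.1
    refine ⟨⟨x, ?_⟩, rfl⟩
    have h2 := hg.2
    rw [← map_inv, ← map_mul, extCol_apply hι] at h2
    simp [hx, Option.some_injective _ h2]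

lemma colCount_ext_mem_zero {ι : U →* G} (hι : Function.Injective ι) (c : U → κ)
    (i j : Option κ) (u : U) (h : i = none ∧ j ≠ none ∨ i ≠ none ∧ j = none) :
    colCount (extCol ι c) i j (ι u) = 0 := by
  have : IsEmpty {x : G // (extCol ι c x, extCol ι c (x⁻¹ * ι u)) = (i, j)} := by
    refine ⟨fun ⟨x, hx⟩ => ?_⟩
    simp only [Prod.mk.injEq] at hx
    obtain ⟨hx1, hx2⟩ := hx
    have key : x⁻¹ * ι u ∈ ι.range ↔ x ∈ ι.range := by
      rw [ι.range.mul_mem_cancel_right ⟨u, rfl⟩, inv_mem_iff]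
    rcases h with ⟨h1, h2⟩ | ⟨h1, h2⟩
    · rw [h1, extCol_eq_none hι] at hx1
      rw [← hx2, ne_eq, extCol_eq_none hι, not_not, key] at h2
      exact hx1 h2
    · rw [h2, extCol_eq_none hι] at hx2
      rw [← hx1, ne_eq, extCol_eq_none hι, not_not, ← key] at h1
      exact hx2 h1
  exact Nat.card_of_isEmpty

lemma colCount_ext_notMem_some_some {ι : U →* G} (hι : Function.Injective ι) (c : U → κ)
    (i j : κ) (g : G) (hg : g ∉ ι.range) :
    colCount (extCol ι c) (some i) (some j) g = 0 := by
  have : IsEmpty {x : G // (extCol ι c x, extCol ι c (x⁻¹ * g)) = (some i, some j)} := by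
    refine ⟨fun ⟨x, hx⟩ => ?_⟩
    simp only [Prod.mk.injEq] at hx
    obtain ⟨x, rfl, -⟩ := (extCol_eq_some hι).1 hx.1
    obtain ⟨y, hy, -⟩ := (extCol_eq_some hι).1 hx.2
    exact hg ⟨x * y, by rw [map_mul, hy]; simp⟩
  exact Nat.card_of_isEmpty

lemma colCount_ext_notMem_some_none {ι : U →* G} (hι : Function.Injective ι) (c : U → κ)
    (i : κ) (g : G) (hg : g ∉ ι.range) :
    colCount (extCol ι c) (some i) none g = Nat.card {u : U // c u = i} := by
  have hmem : ∀ x : {x : U // c x = i},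
      (extCol ι c (ι x.1), extCol ι c ((ι x.1)⁻¹ * g)) = (some i, none) := by
    rintro ⟨x, rfl⟩
    have : extCol ι c ((ι x)⁻¹ * g) = none := by
      rw [extCol_eq_none hι, ι.range.mul_mem_cancel_left (ι.range.inv_mem ⟨x, rfl⟩)]
      exact hg
    simp [extCol_apply hι, this]
  refine (Nat.card_congr (Equiv.ofBijective
    (fun x : {x : U // c x = i} => ⟨ι x.1, hmem x⟩) ⟨?_, ?_⟩)).symm
  · intro x y h
    exact Subtype.ext (hι (Subtype.ext_iff.1 h))
  · rintro ⟨x, hx⟩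
    simp only [Prod.mk.injEq] at hx
    obtain ⟨x, rfl, h⟩ := (extCol_eq_some hι).1 hx.1
    exact ⟨⟨x, h⟩, rfl⟩

lemma colCount_ext_notMem_none_some {ι : U →* G} (hι : Function.Injective ι) (c : U → κ)
    (j : κ) (g : G) (hg : g ∉ ι.range) :
    colCount (extCol ι c) none (some j) g = Nat.card {u : U // c u = j} := by
  have hmem : ∀ x : {x : U // c x = j}, (extCol ι c (g * (ι x.1)⁻¹),
      extCol ι c ((g * (ι x.1)⁻¹)⁻¹ * g)) = (none, some j) := by
    rintro ⟨x, rfl⟩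
    have : extCol ι c (g * (ι x)⁻¹) = none := by
      rw [extCol_eq_none hι, ι.range.mul_mem_cancel_right (ι.range.inv_mem ⟨x, rfl⟩)]
      exact hg
    rw [this]
    simp [extCol_apply hι]
  refine (Nat.card_congr (Equiv.ofBijective
    (fun x : {x : U // c x = j} => ⟨g * (ι x.1)⁻¹, hmem x⟩) ⟨?_, ?_⟩)).symm
  · intro x y h
    have := Subtype.ext_iff.1 h
    simp only [mul_right_inj, inv_inj] at this
    exact Subtype.ext (hι this)
  · rintro ⟨x, hx⟩
    simp only [Prod.mk.injEq] at hx
    obtain ⟨y, h, hy⟩ := (extCol_eq_some hι).1 hx.2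
    refine ⟨⟨y, hy⟩, Subtype.ext ?_⟩
    simp [h]

variable {U' H : Type*} [Group U'] [Group H] [Finite G] [Finite H] [Finite κ]

lemma colCount_ext_eq {ι : U →* G} (hι : Function.Injective ι) {ι' : U' →* H}
    (hι' : Function.Injective ι') (c : U → κ) (c' : U' → κ) (hGH : Nat.card G = Nat.card H)
    (hsize : ∀ i, Nat.card {u // c u = i} = Nat.card {u // c' u = i})
    (hcnt : ∀ u u', c u = c' u' → ∀ i j, colCount c i j u = colCount c' i j u')
    (g : G) (h : H) (hgh : extCol ι c g = extCol ι' c' h) (i j : Option κ) :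
    colCount (extCol ι c) i j g = colCount (extCol ι' c') i j h := by
  -- It suffices to treat pairs of colours different from `(none, none)`.
  have main : ∀ k : Option κ × Option κ, k ≠ (none, none) →
      colCount (extCol ι c) k.1 k.2 g = colCount (extCol ι' c') k.1 k.2 h := by
    rcases hcol : extCol ι c g with _ | a
    · have hg := (extCol_eq_none hι).1 hcol
      have hh := (extCol_eq_none hι').1 (hgh.symm.trans hcol)
      rintro ⟨_ | i, _ | j⟩ hk
      · exact absurd rfl hk
      · simp only [colCount_ext_notMem_none_some hι c j g hg,
          colCount_ext_notMem_none_some hι' c' j h hh, hsize]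
      · simp only [colCount_ext_notMem_some_none hι c i g hg,
          colCount_ext_notMem_some_none hι' c' i h hh, hsize]
      · simp only [colCount_ext_notMem_some_some hι c i j g hg,
          colCount_ext_notMem_some_some hι' c' i j h hh]
    · obtain ⟨u, rfl, hu⟩ := (extCol_eq_some hι).1 hcol
      obtain ⟨u', rfl, hu'⟩ := (extCol_eq_some hι').1 (hgh.symm.trans hcol)
      rintro ⟨_ | i, _ | j⟩ hk
      · exact absurd rfl hk
      · rw [colCount_ext_mem_zero hι _ _ _ _ (by simp), colCount_ext_mem_zero hι' _ _ _ _ (by simp)]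
      · rw [colCount_ext_mem_zero hι _ _ _ _ (by simp), colCount_ext_mem_zero hι' _ _ _ _ (by simp)]
      · simp only [colCount_ext_mem hι, colCount_ext_mem hι']
        exact hcnt u u' (hu.trans hu'.symm) i j
  by_cases hk : (i, j) = ((none, none) : Option κ × Option κ)
  · obtain ⟨rfl, rfl⟩ := Prod.mk.inj hk
    exact card_fibre_eq_of_ne (fun x => (extCol ι c x, extCol ι c (x⁻¹ * g)))
      (fun x => (extCol ι' c' x, extCol ι' c' (x⁻¹ * h))) _ hGH fun k hk => main k hk
  · exact main (i, j) hk

end Extension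

/-- Two colourings `c`, `c'` of groups `U`, `U'` with the same structure constants, such that no
map `U → U'` preserves the colours of quotients, yield a non-separable S-ring over every finite
group `G` containing `U`, provided some finite abelian group `H` of the same order contains
`U'`. -/
theorem not_sep_of_colourings {U U' G H κ : Type*} [Group U] [Group U'] [Group G] [Finite G]
    [CommGroup H] [Finite H] [Finite κ]
    (ι : U →* G) (hι : Function.Injective ι) (ι' : U' →* H) (hι' : Function.Injective ι')
    (hGH : Nat.card G = Nat.card H) (c : U → κ) (c' : U' → κ)
    (h1 : ∀ u, c u = c 1 → u = 1) (h1' : ∀ u, c' u = c' 1 → u = 1)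
    (ν ν' : κ → κ) (hν : ∀ u, c u⁻¹ = ν (c u)) (hν' : ∀ u, c' u⁻¹ = ν' (c' u))
    (hto : ∀ u, ∃ u', c' u' = c u) (hfrom : ∀ u', ∃ u, c u = c' u')
    (hsize : ∀ i, Nat.card {u // c u = i} = Nat.card {u // c' u = i})
    (hcnt : ∀ u u', c u = c' u' → ∀ i j, colCount c i j u = colCount c' i j u')
    (hno : ¬ ∃ F : U → U', ∀ a b, c' (F b * (F a)⁻¹) = c (b * a⁻¹)) :
    ∃ A : SRing G, ¬ ∀ (B : SRing H) (φ : Set G → Set H),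
      IsAlgIso A B φ → ∃ f : G → H, InducedBy A φ f := by
  have hone : ∀ g, extCol ι c g = extCol ι c 1 → g = 1 := by
    intro g hg
    rw [← map_one ι, extCol_apply hι] at hg
    obtain ⟨u, rfl, hu⟩ := (extCol_eq_some hι).1 hg
    rw [h1 u hu, map_one]
  have hone' : ∀ g, extCol ι' c' g = extCol ι' c' 1 → g = 1 := by
    intro g hg
    rw [← map_one ι', extCol_apply hι'] at hg
    obtain ⟨u, rfl, hu⟩ := (extCol_eq_some hι').1 hg
    rw [h1' u hu, map_one]
  have hinv : ∀ g, extCol ι c g⁻¹ = (extCol ι c g).map ν := by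
    intro g
    rcases hcol : extCol ι c g with _ | a
    · rw [extCol_eq_none hι] at hcol
      simpa [extCol_eq_none hι] using hcol
    · obtain ⟨u, rfl, hu⟩ := (extCol_eq_some hι).1 hcol
      rw [← map_inv, extCol_apply hι, hν, hu, Option.map_some]
  have hinv' : ∀ g, extCol ι' c' g⁻¹ = (extCol ι' c' g).map ν' := by
    intro g
    rcases hcol : extCol ι' c' g with _ | a
    · rw [extCol_eq_none hι'] at hcol
      simpa [extCol_eq_none hι'] using hcol
    · obtain ⟨u, rfl, hu⟩ := (extCol_eq_some hι').1 hcol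
      rw [← map_inv, extCol_apply hι', hν', hu, Option.map_some]
  have hcount := colCount_ext_eq hι hι' c c' hGH hsize hcnt
  have cardUU' : Nat.card ι.range = Nat.card ι'.range := by
    have : Finite U := Finite.of_injective ι hι
    have : Finite U' := Finite.of_injective ι' hι'
    have := Fintype.ofFinite κ
    rw [← Nat.card_congr (MonoidHom.ofInjective hι).toEquiv,
      ← Nat.card_congr (MonoidHom.ofInjective hι').toEquiv,
      ← Nat.card_congr (Equiv.sigmaFiberEquiv c), ← Nat.card_congr (Equiv.sigmaFiberEquiv c'),
      Nat.card_sigma, Nat.card_sigma]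
    exact Finset.sum_congr rfl fun i _ => hsize i
  have htop : ι.range = ⊤ ↔ ι'.range = ⊤ := by
    rw [← Subgroup.card_eq_iff_eq_top, ← Subgroup.card_eq_iff_eq_top, cardUU', hGH]
  have hTo : ∀ g, ∃ h, extCol ι' c' h = extCol ι c g := by
    intro g
    rcases hcol : extCol ι c g with _ | a
    · rw [extCol_eq_none hι] at hcol
      have hne : ι'.range ≠ ⊤ := fun h => by
        rw [← htop] at h; rw [h] at hcol; exact hcol (Subgroup.mem_top g)
      obtain ⟨h, hh⟩ := not_forall.1 (mt (Subgroup.eq_top_iff' ι'.range).2 hne)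
      exact ⟨h, (extCol_eq_none hι').2 hh⟩
    · obtain ⟨u, rfl, hu⟩ := (extCol_eq_some hι).1 hcol
      obtain ⟨u', hu'⟩ := hto u
      exact ⟨ι' u', by rw [extCol_apply hι', hu', hu]⟩
  have hFrom : ∀ h, ∃ g, extCol ι c g = extCol ι' c' h := by
    intro g
    rcases hcol : extCol ι' c' g with _ | a
    · rw [extCol_eq_none hι'] at hcol
      have hne : ι.range ≠ ⊤ := fun h => by
        rw [htop] at h; rw [h] at hcol; exact hcol (Subgroup.mem_top g)
      obtain ⟨h, hh⟩ := not_forall.1 (mt (Subgroup.eq_top_iff' ι.range).2 hne)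
      exact ⟨h, (extCol_eq_none hι).2 hh⟩
    · obtain ⟨u, rfl, hu⟩ := (extCol_eq_some hι').1 hcol
      obtain ⟨u', hu'⟩ := hfrom u
      exact ⟨ι u', by rw [extCol_apply hι, hu', hu]⟩
  let A : SRing G := colSRing (extCol ι c) hone
    (fun g h hgh => by rw [hinv, hinv, hgh])
    (fun g h hgh i j => by
      obtain ⟨y, hy⟩ := hTo g
      rw [hcount g y hy.symm, hcount h y (hgh.symm.trans hy.symm)])
  let B : SRing H := colSRing (extCol ι' c') hone'
    (fun g h hgh => by rw [hinv', hinv', hgh])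
    (fun g h hgh i j => by
      obtain ⟨y, hy⟩ := hFrom g
      rw [← hcount y g hy, ← hcount y h (hy.trans hgh)])
  let φ : Set G → Set H := fun X => {h | ∃ g ∈ X, extCol ι' c' h = extCol ι c g}
  have hφ : ∀ g, φ {x | extCol ι c x = extCol ι c g} = {y | extCol ι' c' y = extCol ι c g} := by
    intro g
    ext y
    constructor
    · rintro ⟨x, hx, hy⟩
      exact hy.trans hx
    · intro hy
      exact ⟨g, rfl, hy⟩
  refine ⟨A, fun hsep => ?_⟩
  obtain ⟨f, -, hf⟩ := hsep B φ
    { bijOn := by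
        refine ⟨?_, ?_, ?_⟩
        · rintro X ⟨g, rfl⟩
          obtain ⟨h, hh⟩ := hTo g
          exact ⟨h, by rw [hφ, hh]⟩
        · rintro X ⟨g, rfl⟩ Y ⟨g', rfl⟩ hXY
          simp only [hφ] at hXY
          obtain ⟨h, hh⟩ := hTo g
          have : h ∈ {y | extCol ι' c' y = extCol ι c g'} := hXY ▸ hh
          rw [← hh, show extCol ι' c' h = extCol ι c g' from this]
        · rintro Y ⟨h, rfl⟩
          obtain ⟨g, hg⟩ := hFrom h
          exact ⟨_, ⟨g, rfl⟩, by rw [hφ, hg]⟩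
      structConst_eq := by
        rintro X ⟨a, rfl⟩ Y ⟨b, rfl⟩ Z ⟨d, rfl⟩ z hz z' hz'
        rw [hφ] at hz' ⊢
        rw [hφ, structConst_fibre, structConst_fibre]
        exact hcount z z' (Eq.trans hz (Eq.symm hz')) _ _ }
  have hpres : ∀ a b, extCol ι' c' (f b * (f a)⁻¹) = extCol ι c (b * a⁻¹) := by
    intro a b
    have hmem : (f a, f b) ∈ mapRel f (RSet {x | extCol ι c x = extCol ι c (b * a⁻¹)}) :=
      ⟨(a, b), ⟨b * a⁻¹, rfl, by simp⟩, rfl⟩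
    rw [hf _ ⟨b * a⁻¹, rfl⟩, hφ] at hmem
    obtain ⟨y, hy, hyb⟩ := hmem
    simp only at hyb
    rw [hyb]
    simpa using hy
  apply hno
  -- Normalise `f` so that the image of `1` is `1`, and restrict to `U`.
  have hF : ∀ u, ∃ u', ι' u' = f (ι u) * (f 1)⁻¹ := by
    intro u
    have := hpres 1 (ι u)
    rw [inv_one, mul_one, extCol_apply hι] at this
    obtain ⟨u', hu', -⟩ := (extCol_eq_some hι').1 this
    exact ⟨u', hu'⟩
  choose F hF using hF
  refine ⟨F, fun a b => Option.some_injective _ ?_⟩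
  rw [← extCol_apply hι', ← extCol_apply hι, map_mul, map_mul, map_inv, map_inv, hF, hF, ← hpres]
  congr 1
  group


/-! ### Packing structure constants into one number -/
/-- Uniqueness of base-`B` digits. -/
lemma digits_unique {B : ℕ} : ∀ {m : ℕ} (a b : Fin m → ℕ), (∀ i, a i < B) → (∀ i, b i < B) →
    ∑ i, a i * B ^ (i : ℕ) = ∑ i, b i * B ^ (i : ℕ) → a = b := by
  intro m
  induction m with
  | zero => intro a b _ _ _; exact Subsingleton.elim _ _
  | succ m ih =>
    intro a b ha hb h
    have split : ∀ d : Fin (m + 1) → ℕ, ∑ i, d i * B ^ (i : ℕ) =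
        d 0 + B * ∑ i : Fin m, d i.succ * B ^ (i : ℕ) := by
      intro d
      rw [Fin.sum_univ_succ, Finset.mul_sum]
      congr 1
      · simp
      · refine Finset.sum_congr rfl fun i _ => ?_
        rw [Fin.val_succ, pow_succ]
        ring
    rw [split, split] at h
    have h0 : a 0 = b 0 := by
      have := congrArg (· % B) h
      simpa [Nat.add_mul_mod_self_left, Nat.mod_eq_of_lt (ha 0), Nat.mod_eq_of_lt (hb 0)] using this
    have hpos : 0 < B := (Nat.zero_le _).trans_lt (ha 0)
    have hs : (fun i : Fin m => a i.succ) = fun i => b i.succ := by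
      refine ih _ _ (fun i => ha _) (fun i => hb _) ?_
      rw [h0] at h
      exact Nat.eq_of_mul_eq_mul_left hpos (Nat.add_left_cancel h)
    funext i
    refine Fin.cases h0 (fun i => congrFun hs i) i

lemma sum_pow_eq_sum_card {α : Type*} [Fintype α] {m : ℕ} (f : α → Fin m) (B : ℕ) :
    ∑ x, B ^ (f x : ℕ) = ∑ i, Nat.card {x // f x = i} * B ^ (i : ℕ) := by
  classical
  rw [← Finset.sum_fiberwise Finset.univ f]
  refine Finset.sum_congr rfl fun i _ => ?_
  rw [Finset.sum_congr rfl (g := fun _ => B ^ (i : ℕ))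
    (fun x hx => by rw [(Finset.mem_filter.1 hx).2]), Finset.sum_const, smul_eq_mul,
    Nat.card_eq_fintype_card, Fintype.card_subtype]

/-- A sum of powers of a base `B` exceeding the number of summands determines how often each
exponent occurs: the multiplicities are its base-`B` digits. -/
lemma card_fibre_eq_of_sum_pow {α β : Type*} [Fintype α] [Fintype β] {m : ℕ}
    (f : α → Fin m) (g : β → Fin m) (B : ℕ) (hα : Fintype.card α < B)
    (hβ : Fintype.card β < B) (h : ∑ x, B ^ (f x : ℕ) = ∑ x, B ^ (g x : ℕ)) (i : Fin m) :
    Nat.card {x // f x = i} = Nat.card {x // g x = i} := by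
  classical
  rw [sum_pow_eq_sum_card, sum_pow_eq_sum_card] at h
  refine congrFun (digits_unique _ _ (fun i => ?_) (fun i => ?_) h) i
  · rw [Nat.card_eq_fintype_card]
    exact (Fintype.card_subtype_le _).trans_lt hα
  · rw [Nat.card_eq_fintype_card]
    exact (Fintype.card_subtype_le _).trans_lt hβ

/-- The numbers `colCount c i j z` for all `i, j`, packed as the base-`B` digits of one number. -/
def packedCounts {U : Type*} [AddGroup U] [Fintype U] {n : ℕ} (B : ℕ) (c : U → Fin n) (z : U) : ℕ :=
  ∑ x, B ^ (n * (c x : ℕ) + (c (-x + z) : ℕ))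

lemma colCount_eq_of_packed {U U' : Type*} [AddGroup U] [Fintype U] [AddGroup U'] [Fintype U']
    {n : ℕ} (B : ℕ) (c : U → Fin n) (c' : U' → Fin n) (hU : Fintype.card U < B)
    (hU' : Fintype.card U' < B) (z : U) (z' : U')
    (h : packedCounts B c z = packedCounts B c' z') (i j : Fin n) :
    colCount (G := Multiplicative U) (fun u => c u.toAdd) i j (.ofAdd z) =
      colCount (G := Multiplicative U') (fun u => c' u.toAdd) i j (.ofAdd z') := by
  have key := card_fibre_eq_of_sum_pow (m := n * n)
    (fun x : U => finProdFinEquiv (c x, c (-x + z)))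
    (fun x : U' => finProdFinEquiv (c' x, c' (-x + z'))) B hU hU'
    (by
      simp only [finProdFinEquiv_apply_val]
      simpa only [packedCounts, add_comm] using h) (finProdFinEquiv (i, j))
  simp only [EmbeddingLike.apply_eq_iff_eq] at key
  exact key

/-- Additive form of `not_sep_of_colourings`, with the comparison of structure constants reduced
to a common table `T` of packed counts. -/
theorem not_sep_of_packed {U U' G H : Type*} [AddGroup U] [Fintype U] [AddGroup U'] [Fintype U']
    [Group G] [Finite G] [CommGroup H] [Finite H] {n : ℕ}
    (ι : Multiplicative U →* G) (hι : Function.Injective ι)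
    (ι' : Multiplicative U' →* H) (hι' : Function.Injective ι')
    (hGH : Nat.card G = Nat.card H) (c : U → Fin n) (c' : U' → Fin n)
    (h1 : ∀ u, c u = c 0 → u = 0) (h1' : ∀ u, c' u = c' 0 → u = 0)
    (ν ν' : Fin n → Fin n) (hν : ∀ u, c (-u) = ν (c u)) (hν' : ∀ u, c' (-u) = ν' (c' u))
    (hto : ∀ i, ∃ u, c u = i) (hto' : ∀ i, ∃ u, c' u = i)
    (hsize : ∀ i, Fintype.card {u // c u = i} = Fintype.card {u // c' u = i})
    (B : ℕ) (T : Fin n → ℕ) (hU : Fintype.card U < B) (hU' : Fintype.card U' < B)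
    (hT : ∀ z, packedCounts B c z = T (c z)) (hT' : ∀ z, packedCounts B c' z = T (c' z))
    (hno : ¬ ∃ F : U → U', ∀ a b, c' (F b - F a) = c (b - a)) :
    ∃ A : SRing G, ¬ ∀ (B : SRing H) (φ : Set G → Set H),
      IsAlgIso A B φ → ∃ f : G → H, InducedBy A φ f := by
  refine not_sep_of_colourings ι hι ι' hι' hGH (fun u => c u.toAdd) (fun u => c' u.toAdd)
    h1 h1' ν ν' hν hν' (fun u => hto' _) (fun u => hto _) (fun i => ?_)
    (fun u u' h => colCount_eq_of_packed B c c' hU hU' u.toAdd u'.toAdd ?_) ?_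
  · have := hsize i
    rw [← Nat.card_eq_fintype_card, ← Nat.card_eq_fintype_card] at this
    exact this
  · rw [hT, hT']
    exact congrArg T h
  · rintro ⟨F, hF⟩
    refine hno ⟨fun u => (F (.ofAdd u)).toAdd, fun a b => ?_⟩
    rw [sub_eq_add_neg, sub_eq_add_neg]
    exact hF (.ofAdd a) (.ofAdd b)

/-- The cyclic group of order `p ^ 2` embeds into that of order `p ^ k` for `k ≥ 2`. -/
lemma exists_embedding (p k : ℕ) (hp : p ≠ 0) (hk : 2 ≤ k) :
    ∃ m : ZMod (p ^ 2) →+ ZMod (p ^ k), Function.Injective m := by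
  obtain ⟨l, rfl⟩ := Nat.exists_eq_add_of_le hk
  let f : ℤ →+ ZMod (p ^ (2 + l)) :=
    (AddMonoidHom.mulLeft ((p : ZMod (p ^ (2 + l))) ^ l)).comp (Int.castAddHom _)
  have hf : ∀ a : ℤ, f a = ((p ^ l * a : ℤ) : ZMod (p ^ (2 + l))) := fun a => by simp [f]
  have hz : ∀ a : ℤ, f a = 0 ↔ ((p ^ 2 : ℕ) : ℤ) ∣ a := by
    intro a
    rw [hf, ZMod.intCast_zmod_eq_zero_iff_dvd]
    push_cast
    rw [add_comm, pow_add]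
    exact mul_dvd_mul_iff_left (pow_ne_zero _ (by exact_mod_cast hp))
  refine ⟨ZMod.lift _ ⟨f, (hz _).2 dvd_rfl⟩, (ZMod.lift_injective _).2 fun a ha => ?_⟩
  exact (ZMod.intCast_zmod_eq_zero_iff_dvd _ _).2 ((hz a).1 ha)

/-! ### The rook graph and the Shrikhande graph -/

/-- The colouring of `C₂ × C₂ × C₄` giving the 4 × 4 rook graph: the colour of the difference of
two elements is `0` if they are equal, `1` if they agree in the row (the `C₂ × C₂` component) or
in the column (the `C₄` component), and `2` otherwise. -/
def rook (u : ZMod 2 × ZMod 2 × ZMod 4) : Fin 3 :=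
  if u = 0 then 0 else if (u.1 = 0 ∧ u.2.1 = 0) ∨ u.2.2 = 0 then 1 else 2

/-- The colouring of `C₄ × C₄` giving the Shrikhande graph, the Cayley graph with connection set
`{±(1,0), ±(0,1), ±(1,1)}`: colour `1` for edges, colour `2` for non-edges. -/
def shrikhande (u : ZMod 4 × ZMod 4) : Fin 3 :=
  if u = 0 then 0 else
    if u = (1, 0) ∨ u = (3, 0) ∨ u = (0, 1) ∨ u = (0, 3) ∨ u = (1, 1) ∨ u = (3, 3) then 1 else 2

/-- The packed structure constants of the 4 × 4 rook graph. -/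
def rookTable (i : Fin 3) : ℕ :=
  if i = 0 then packedCounts 17 rook 0 else if i = 1 then packedCounts 17 rook (0, 0, 1)
    else packedCounts 17 rook (0, 1, 1)

lemma rook_packed : ∀ z, packedCounts 17 rook z = rookTable (rook z) := by decide +kernel

/-- The Shrikhande graph is strongly regular with the same parameters as the rook graph. -/
lemma shrikhande_packed : ∀ z, packedCounts 17 shrikhande z = rookTable (shrikhande z) := by
  decide +kernel

/-- The rows of the rook graph are 4-cliques, whereas the Shrikhande graph has none. -/
lemma no_rook_map : ¬ ∃ F : ZMod 2 × ZMod 2 × ZMod 4 → ZMod 4 × ZMod 4,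
    ∀ a b, shrikhande (F b - F a) = rook (b - a) := by
  rintro ⟨F, hF⟩
  have noK4 : ∀ a, shrikhande a = 1 → ∀ b, shrikhande b = 1 → shrikhande (b - a) = 1 →
      ∀ d, shrikhande d = 1 → shrikhande (d - a) = 1 → shrikhande (d - b) ≠ 1 := by
    decide +kernel
  refine noK4 (F (0, 0, 1) - F 0) ?_ (F (0, 0, 2) - F 0) ?_ ?_ (F (0, 0, 3) - F 0) ?_ ?_ ?_
  all_goals
    simp only [sub_sub_sub_cancel_right, hF]
    decide

/-! ### Two colourings of `C₃ × C₃ × C₉` -/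

/-- The common shape of the two colourings of `C₃ × C₃ × C₉`, on representatives `0 ≤ x, y < 3`
and `0 ≤ z < 9`. With `v = (x, y)`:
* on the subgroup `3 ∣ z` the element `(0, 0)` has colour `0`, the elements `(0, ±3)` have
  colour `1`, and `(v, 3w)` with `v ≠ 0` has colour `2 + (w Q(v) mod 3)`;
* for `3 ∤ z` the elements `(0, z)` have colour `5`, and `(v, z)` with `v ≠ 0` has colour
  `5 + (z Q'(v) mod 3)`.
The forms `Q`, `Q'` are anisotropic modulo `3` in the applications, so that `Q(v)`, `Q'(v)` are
`±1` modulo `3` for `v ≠ 0`. -/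
def formColour (Q Q' : ℕ → ℕ → ℕ) (x y z : ℕ) : ℕ :=
  if z % 3 = 0 then
    if x = 0 ∧ y = 0 then (if z = 0 then 0 else 1) else 2 + z / 3 * Q x y % 3
  else if x = 0 ∧ y = 0 then 5 else 5 + z * Q' x y % 3

/-- The colouring of `C₃ × C₃ × C₉` with `x² + y²` on the subgroup `3 ∣ z` and `Q` outside it. -/
def formCol (Q : ℕ → ℕ → ℕ) (u : ZMod 3 × ZMod 3 × ZMod 9) : Fin 8 :=
  Fin.ofNat 8 (formColour (fun x y => x * x + y * y) Q u.1.val u.2.1.val u.2.2.val)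

/-- The colouring using the form `x² + y²` throughout. -/
def plainCol := formCol (fun x y => x * x + y * y)

/-- The colouring using the sheared form `(x + y)² + y²` outside the subgroup `3 ∣ z`. -/
def twistCol := formCol (fun x y => x * x + 2 * x * y + 2 * y * y)

/-- The packed structure constants of `plainCol`, read off at a representative of each colour. -/
def plainTable (i : Fin 8) : ℕ :=
  packedCounts 128 plainCol (match i with
    | 0 => 0
    | 1 => (0, 0, 3)
    | 2 => (1, 0, 0)
    | 3 => (1, 0, 3)
    | 4 => (1, 0, 6)
    | 5 => (0, 0, 1)
    | 6 => (1, 0, 1)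
    | 7 => (1, 0, 2))

lemma plainCol_packed : ∀ z, packedCounts 128 plainCol z = plainTable (plainCol z) := by
  decide +kernel

/-- The twist does not change the structure constants. -/
lemma twistCol_packed : ∀ z, packedCounts 128 twistCol z = plainTable (twistCol z) := by
  decide +kernel

/-- How negation acts on the colours of `plainCol` and `twistCol`. -/
def negColour (i : Fin 8) : Fin 8 :=
  match i with
  | 3 => 4
  | 4 => 3
  | 6 => 7
  | 7 => 6
  | j => j

/-- A configuration of six points realised in `twistCol` but not in `plainCol`. -/
lemma no_twist_map : ¬ ∃ F : ZMod 3 × ZMod 3 × ZMod 9 → ZMod 3 × ZMod 3 × ZMod 9,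
    ∀ a b, plainCol (F b - F a) = twistCol (b - a) := by
  rintro ⟨F, hF⟩
  have none_plain : ∀ l, plainCol l = 1 →
      ∀ r, plainCol r = 3 → plainCol (r - l) = 2 →
      ∀ s, plainCol s = 3 → plainCol (s - l) = 2 →
      ∀ q, plainCol q = 6 → plainCol (q - r) = 5 →
      ∀ t, plainCol t = 7 → plainCol (t - s) = 5 → plainCol (t - q) ≠ 2 := by
    decide +kernel
  refine none_plain (F (0, 0, 6) - F 0) ?_ (F (2, 2, 6) - F 0) ?_ ?_ (F (2, 1, 6) - F 0) ?_ ?_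
    (F (2, 2, 8) - F 0) ?_ ?_ (F (2, 1, 8) - F 0) ?_ ?_ ?_
  all_goals
    simp only [sub_sub_sub_cancel_right, hF]
    decide +kernel

/-! ### The embeddings into the ambient groups -/

/-- `C_p × C_p × C_{p²}` embeds into `C_p × C_p × C_{p^k}` for `k ≥ 2`. -/
lemma exists_embedding_prod (p k : ℕ) (hp : p ≠ 0) (hk : 2 ≤ k) :
    ∃ m : Multiplicative (ZMod p × ZMod p × ZMod (p ^ 2)) →*
      Multiplicative (ZMod p × ZMod p × ZMod (p ^ k)), Function.Injective m := by
  obtain ⟨m, hm⟩ := exists_embedding p k hp hk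
  refine ⟨AddMonoidHom.toMultiplicative
    ((AddMonoidHom.id (ZMod p)).prodMap ((AddMonoidHom.id (ZMod p)).prodMap m)), ?_⟩
  exact Function.Injective.prodMap Function.injective_id
    (Function.Injective.prodMap Function.injective_id hm)

theorem exists_not_sepAbelian_two {k : ℕ} (hk : 2 ≤ k) {G : Type*} [Group G] [Finite G]
    (e : G ≃* Multiplicative (ZMod 2 × ZMod 2 × ZMod (2 ^ k))) :
    ∃ A : SRing G, ¬ SepAbelian A := by
  obtain ⟨m, hm⟩ := exists_embedding_prod 2 k (by norm_num) hk
  let ι' : Multiplicative (ZMod 4 × ZMod 4) →*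
      ULift (Multiplicative ((ZMod 4 × ZMod 4) × ZMod (2 ^ (k - 2)))) :=
    MulEquiv.ulift.symm.toMonoidHom.comp
      (AddMonoidHom.toMultiplicative (AddMonoidHom.inl (ZMod 4 × ZMod 4) (ZMod (2 ^ (k - 2)))))
  have hι' : Function.Injective ι' :=
    MulEquiv.ulift.symm.injective.comp (Prod.mk_left_injective 0)
  have hcard : Nat.card G =
      Nat.card (ULift (Multiplicative ((ZMod 4 × ZMod 4) × ZMod (2 ^ (k - 2))))) := by
    obtain ⟨l, rfl⟩ := Nat.exists_eq_add_of_le hk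
    rw [Nat.card_congr e.toEquiv, Nat.card_congr Equiv.ulift,
      Nat.card_congr Multiplicative.toAdd, Nat.card_congr Multiplicative.toAdd]
    simp only [Nat.card_prod, Nat.card_zmod, Nat.add_sub_cancel_left, pow_add]
    ring
  obtain ⟨A, hA⟩ := not_sep_of_packed (U := ZMod 2 × ZMod 2 × ZMod 4)
    (e.symm.toMonoidHom.comp m) (e.symm.injective.comp hm) ι' hι' hcard rook shrikhande
    (by decide +kernel) (by decide +kernel) id id (by decide +kernel) (by decide +kernel)
    (by decide +kernel) (by decide +kernel) (by decide +kernel) 17 rookTable (by decide +kernel)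
    (by decide +kernel) rook_packed shrikhande_packed no_rook_map
  exact ⟨A, fun h => hA (h _)⟩

theorem exists_not_sepAbelian_three {k : ℕ} (hk : 2 ≤ k) {G : Type*} [Group G] [Finite G]
    (e : G ≃* Multiplicative (ZMod 3 × ZMod 3 × ZMod (3 ^ k))) :
    ∃ A : SRing G, ¬ SepAbelian A := by
  obtain ⟨m, hm⟩ := exists_embedding_prod 3 k (by norm_num) hk
  have hcard : Nat.card G =
      Nat.card (ULift (Multiplicative (ZMod 3 × ZMod 3 × ZMod (3 ^ k)))) :=
    Nat.card_congr (e.toEquiv.trans Equiv.ulift.symm)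
  obtain ⟨A, hA⟩ := not_sep_of_packed (U := ZMod 3 × ZMod 3 × ZMod 9)
    (U' := ZMod 3 × ZMod 3 × ZMod 9)
    (e.symm.toMonoidHom.comp m) (e.symm.injective.comp hm)
    (MulEquiv.ulift.symm.toMonoidHom.comp m) (MulEquiv.ulift.symm.injective.comp hm)
    hcard twistCol plainCol
    (by decide +kernel) (by decide +kernel) negColour negColour (by decide +kernel)
    (by decide +kernel) (by decide +kernel) (by decide +kernel) (by decide +kernel) 128 plainTable
    (by decide +kernel) (by decide +kernel) twistCol_packed plainCol_packed no_twist_map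
  exact ⟨A, fun h => hA (h _)⟩

end SRingPaper

open SRingPaper in
/-- for `p ∈ {2,3}` and `k ≥ 2`, the group `C_p × C_p × C_{p^k}` is
not separable with respect to the class of finite abelian groups: some S-ring
over it admits an algebraic isomorphism to an S-ring over a finite abelian group
that is not induced by any combinatorial isomorphism. -/
theorem Cp_Cp_Cpk_not_separable
    (p k : ℕ) (hp : p = 2 ∨ p = 3) (hk : 2 ≤ k)
    (G : Type*) [Group G] [Finite G]
    (hG : Nonempty (G ≃* Multiplicative (ZMod p × ZMod p × ZMod (p ^ k)))) :
    ∃ A : SRing G, ¬ SepAbelian A := by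
  obtain ⟨e⟩ := hG
  rcases hp with rfl | rfl
  · exact exists_not_sepAbelian_two hk e
  · exact exists_not_sepAbelian_three hk e
end

section
/- Every S-ring 𝒜 over the elementary abelian group C_2 × C_2 × C_2 is schurian, and at least one of the following holds: (1) rk(𝒜) = 2; (2) 𝒜 is the tensor product of S-rings over two proper nontrivial subgroups G₁, G₂ with G = G₁ × G₂; (3) 𝒜 is a proper S-wreath product for some 𝒜-section S = U/L with |S| ≤ 2. -/
/-!
The group `C₂³` is identified with `{0, …, 7}` under bitwise exclusive or, and an S-ring over it
with the labelling that sends each element to the least element of its basic set. The class of the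
identity is a singleton, so only the 877 partitions of the seven nonzero elements can occur.

Only one consequence of the S-ring axioms is needed: the set product of two basic sets is again a
union of basic sets (`SRing.exists_mul_of_same`). By a finite computation, carried out inside the
kernel (`searchAll_true`), every partition with this property satisfies the theorem in the
following form:

* any two elements of a class are related by a linear map of `𝔽₂³` preserving all classes, whence
  the basic sets are the orbits of the stabilizer of the identity in `Aut(𝒜)`
  (`isSchurian_of_transitive`);
* there is just one class of nonzero elements, or the partition is a tensor product over a line and
  a complementary plane, or it is a wreath product for some section `U/L` with `L` nontrivial and
  `U` proper. In a group of order 8 such a section has order at most 2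
  (`card_le_two_mul_card`).

`exists_labels` shows that the enumeration reaches the labelling of every S-ring, and the lemmas
`Labels.isSchurian`, `Labels.ncard_parts`, `Labels.tensor` and `Labels.wreath` translate the outcome
of the computation back to `G`.
-/

open scoped Pointwise

namespace SRingPaper

/-! ### The computation on labellings -/

/-- Membership in the subgroup `{0, a, b, a + b}` of `C₂³`, whose elements are coded as the numbers
`0, …, 7` with bitwise exclusive or as addition. -/
def inSpan (s : ℕ × ℕ) (x : ℕ) : Bool :=
  x == 0 || x == s.1 || x == s.2 || x == s.1 ^^^ s.2

/-- The subgroups of order 2 of `C₂³`, by generating pairs. -/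
def lineGens : List (ℕ × ℕ) := [(1, 1), (2, 2), (3, 3), (4, 4), (5, 5), (6, 6), (7, 7)]

/-- The subgroups of order 4 of `C₂³`, by generating pairs. -/
def planeGens : List (ℕ × ℕ) := [(1, 2), (1, 4), (1, 6), (2, 4), (2, 5), (3, 4), (3, 5)]

/-- The linear map of `𝔽₂³` sending the basis `1, 2, 4` to `a, b, d`. -/
def lin (a b d x : ℕ) : ℕ :=
  (bif x.testBit 0 then a else 0) ^^^ (bif x.testBit 1 then b else 0) ^^^
    (bif x.testBit 2 then d else 0)

/-- The product of two classes of the labelling `c` is a union of classes: whenever `z` lies in the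
class of `x + y`, it is the sum of an element of the class of `x` and one of the class of `y`. Only
the pairs with `0 < x ≤ y` and `x` the representative of its class are tested. -/
def productsClosed (c : ℕ → ℕ) : Bool :=
  (List.range 8).all fun x => x == 0 || !(c x == x) || (List.range 8).all fun y => Nat.blt y x ||
    (List.range 8).all fun z => !(c z == c (x ^^^ y)) ||
      (List.range 8).any fun u => c u == x && c (u ^^^ z) == c y

/-- Each element of a class of `c` is taken to each other one by a linear map preserving all
classes. -/
def linTransitive (c : ℕ → ℕ) : Bool :=
  (List.range 8).all fun x => (List.range 8).all fun y => !(c x == c y) ||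
    (List.range 8).any fun a => c a == c 1 && (List.range 8).any fun b => c b == c 2 &&
      (List.range 8).any fun d => lin a b d x == y &&
        (List.range 8).all fun u => c (lin a b d u) == c u

/-- All nonzero elements have the same label. -/
def rankTwo (c : ℕ → ℕ) : Bool :=
  (List.range 8).all fun x => x == 0 || c x == c 1

/-- The subgroup generated by `s` is a union of classes of `c`. -/
def spanSaturated (c : ℕ → ℕ) (s : ℕ × ℕ) : Bool :=
  (List.range 8).all fun x => (List.range 8).all fun y =>
    !(c x == c y) || inSpan s x == inSpan s y

/-- The labelling `c` is a tensor product over a line `s` and a complementary plane `t`. -/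
def isTensor (c : ℕ → ℕ) : Bool :=
  lineGens.any fun s => spanSaturated c s && planeGens.any fun t => spanSaturated c t &&
    ((List.range 8).all fun x => x == 0 || !(inSpan s x && inSpan t x)) &&
    ((List.range 8).all fun x => (List.range 8).any fun y => inSpan s y && inSpan t (x ^^^ y)) &&
    (List.range 8).all fun y => !inSpan s y || (List.range 8).all fun v => !inSpan s v ||
      (List.range 8).all fun z => !inSpan t z || (List.range 8).all fun w => !inSpan t w ||
        ((c (y ^^^ z) == c (v ^^^ w)) == (c y == c v && c z == c w))

/-- The labelling `c` is a proper wreath product with respect to a section `U/L`, where `U` and `L`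
are generated by `t` and `s`. -/
def isWreath (c : ℕ → ℕ) : Bool :=
  (lineGens ++ planeGens).any fun s => spanSaturated c s &&
    (lineGens ++ planeGens).any fun t => spanSaturated c t &&
      ((List.range 8).all fun x => !inSpan s x || inSpan t x) &&
      (List.range 8).all fun x => inSpan t x || (List.range 8).all fun l => !inSpan s l ||
        c (x ^^^ l) == c x

/-- The assertion of the theorem for a single labelling. -/
def labelTest (c : ℕ → ℕ) : Bool :=
  !productsClosed c || (linTransitive c && (rankTwo c || isTensor c || isWreath c))

/-- The octal digit of `N` at position `n`; a labelling of `0, …, 7` is coded by its digits. -/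
def octDigit (N n : ℕ) : ℕ := (N >>> (3 * n)) % 8

/-- Extends the labelling of `0, …, n - 1` coded by `N` in all ways by `k` further labels, where
each class is labelled by its least element and `{0}` is a class, and tests the results. -/
def searchAll : ℕ → ℕ → ℕ → Bool
  | 0, _, N => labelTest (octDigit N)
  | k + 1, n, N => (List.range (n + 1)).all fun i =>
      i == 0 || !(i == n || octDigit N i == i) || searchAll k (n + 1) (N + i * 8 ^ n)

/-- The kernel evaluates the test on all 877 partitions of `{1, …, 7}`. -/
theorem searchAll_true : searchAll 7 1 0 = true := by
  decide +kernel

end SRingPaper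

namespace SRingPaper

/-! ### Completeness of the enumeration -/

/-- The number whose octal digits at the positions below `n` are the values of `c`. -/
def octPack (c : ℕ → ℕ) : ℕ → ℕ
  | 0 => 0
  | n + 1 => octPack c n + c n * 8 ^ n

theorem octPack_lt {c : ℕ → ℕ} (n : ℕ) (hc : ∀ i < n, c i < 8) : octPack c n < 8 ^ n := by
  induction n with
  | zero => simp [octPack]
  | succ n ih =>
    have h1 := ih fun i hi => hc i (by omega)
    have h2 : c n * 8 ^ n ≤ 7 * 8 ^ n := Nat.mul_le_mul_right _ (by have := hc n (by omega); omega)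
    simp only [octPack, pow_succ]
    omega

theorem octDigit_eq (N n : ℕ) : octDigit N n = N / 8 ^ n % 8 := by
  rw [octDigit, Nat.shiftRight_eq_div_pow, pow_mul]
  rfl

theorem octDigit_octPack {c : ℕ → ℕ} (n : ℕ) (hc : ∀ i < n, c i < 8) {i : ℕ} (hi : i < n) :
    octDigit (octPack c n) i = c i := by
  rw [octDigit_eq]
  induction n with
  | zero => omega
  | succ n ih =>
    have hc' : ∀ i < n, c i < 8 := fun i hi => hc i (by omega)
    rcases Nat.lt_succ_iff_lt_or_eq.mp hi with h | rfl
    · rw [← ih hc' h]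
      obtain ⟨m, rfl⟩ : ∃ m, n = i + 1 + m := ⟨n - (i + 1), by omega⟩
      have : octPack c (i + 1 + m + 1)
          = octPack c (i + 1 + m) + 8 ^ i * (8 * (c (i + 1 + m) * 8 ^ m)) := by
        simp only [octPack]
        ring
      rw [this, Nat.add_mul_div_left _ _ (by positivity), Nat.add_mul_mod_self_left]
    · simp only [octPack]
      rw [Nat.add_mul_div_right _ _ (by positivity), Nat.div_eq_of_lt (octPack_lt i hc'), zero_add,
        Nat.mod_eq_of_lt (hc i hi)]

/-- The search reaches every labelling by least elements of classes in which `0` is alone. -/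
theorem labelTest_of_searchAll {c : ℕ → ℕ} (hpos : ∀ i < 8, i ≠ 0 → c i ≠ 0)
    (hle : ∀ i < 8, c i ≤ i) (hcc : ∀ i < 8, c (c i) = c i) :
    ∀ k n : ℕ, n + k = 8 → n ≠ 0 → searchAll k n (octPack c n) = true →
      labelTest (octDigit (octPack c 8)) = true := by
  intro k
  induction k with
  | zero =>
    intro n hn _ h
    obtain rfl : n = 8 := by omega
    exact h
  | succ k ih =>
    intro n hn hn0 h
    refine ih (n + 1) (by omega) (by omega) ?_
    have hn8 : n < 8 := by omega
    have hcn := hle n hn8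
    simp only [searchAll, List.all_eq_true, List.mem_range] at h
    have hall := h (c n) (by omega)
    have h0 : (c n == 0) = false := by simpa using hpos n hn8 hn0
    have h1 : (c n == n || octDigit (octPack c n) (c n) == c n) = true := by
      rcases hcn.lt_or_eq with hlt | heq
      · rw [octDigit_octPack n (fun i hi => by have := hle i (by omega); omega) hlt, hcc n hn8]
        simp
      · simp [heq]
    rw [h0, h1] at hall
    simpa [octPack] using hall

/-- Every labelling by least elements of classes, with `0` alone in its class, agrees on
`0, …, 7` with one that passes the test. -/
theorem exists_labelTest {c : ℕ → ℕ} (hpos : ∀ i < 8, i ≠ 0 → c i ≠ 0)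
    (hle : ∀ i < 8, c i ≤ i) (hcc : ∀ i < 8, c (c i) = c i) :
    ∃ c' : ℕ → ℕ, (∀ i < 8, c' i = c i) ∧ labelTest c' = true := by
  refine ⟨octDigit (octPack c 8), fun i hi => octDigit_octPack 8 ?_ hi,
    labelTest_of_searchAll hpos hle hcc 7 1 rfl one_ne_zero ?_⟩
  · intro i hi
    have := hle i hi
    omega
  · have h0 : c 0 = 0 := Nat.le_zero.mp (hle 0 (by norm_num))
    have : octPack c 1 = 0 := by simp [octPack, h0]
    rw [this]
    exact searchAll_true

/-! ### Coordinates -/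

/-- An isomorphism of `G` with `C₂³`, the latter realised as `{0, …, 7}` under bitwise exclusive
or. -/
structure Coord (G : Type*) [Group G] where
  toFun : G → ℕ
  lt : ∀ g, toFun g < 8
  inj : ∀ g h, toFun g = toFun h → g = h
  surj : ∀ n < 8, ∃ g, toFun g = n
  map_mul : ∀ g h, toFun (g * h) = toFun g ^^^ toFun h

theorem exists_coord {G : Type*} [Group G]
    (hG : Nonempty (G ≃* Multiplicative (ZMod 2 × ZMod 2 × ZMod 2))) : Nonempty (Coord G) := by
  obtain ⟨φ⟩ := hG
  let v : ZMod 2 × ZMod 2 × ZMod 2 → ℕ := fun x => x.1.val + 2 * x.2.1.val + 4 * x.2.2.val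
  have hlt : ∀ x, v x < 8 := by decide
  have hinj : ∀ x y, v x = v y → x = y := by decide
  have hsurj : ∀ n < 8, ∃ x, v x = n := by decide
  have hadd : ∀ x y, v (x + y) = v x ^^^ v y := by decide
  refine ⟨⟨fun g => v (φ g).toAdd, fun g => hlt _, fun g h hgh => ?_, fun n hn => ?_, fun g h => ?_⟩⟩
  · exact φ.injective (Multiplicative.toAdd.injective (hinj _ _ hgh))
  · obtain ⟨x, hx⟩ := hsurj n hn
    exact ⟨φ.symm (Multiplicative.ofAdd x), by simpa using hx⟩
  · rw [_root_.map_mul, toAdd_mul, hadd]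

namespace Coord

variable {G : Type*} [Group G] (κ : Coord G)

theorem map_one : κ.toFun 1 = 0 := by
  have h := κ.map_mul 1 1
  rw [mul_one, Nat.xor_self] at h
  exact h

theorem map_inv (g : G) : κ.toFun g⁻¹ = κ.toFun g := by
  have h := κ.map_mul g g⁻¹
  rw [mul_inv_cancel, κ.map_one] at h
  exact (Nat.xor_eq_zero_iff.mp h.symm).symm

theorem eq_one {g : G} (h : κ.toFun g = 0) : g = 1 :=
  κ.inj _ _ (h.trans κ.map_one.symm)

theorem card_eq (κ : Coord G) : Nat.card G = 8 := by
  have e : G ≃ Fin 8 := Equiv.ofBijective (fun g => ⟨κ.toFun g, κ.lt g⟩)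
    ⟨fun g h hgh => κ.inj _ _ (by simpa using hgh),
      fun n => (κ.surj n n.2).imp fun g hg => Fin.ext hg⟩
  rw [Nat.card_congr e, Nat.card_fin]

theorem inSpan_xor (s : ℕ × ℕ) {x y : ℕ} (hx : inSpan s x = true) (hy : inSpan s y = true) :
    inSpan s (x ^^^ y) = true := by
  obtain ⟨a, b⟩ := s
  simp only [inSpan, Bool.or_eq_true, beq_iff_eq] at hx hy ⊢
  rcases hx with ((rfl | rfl) | rfl) | rfl <;> rcases hy with ((rfl | rfl) | rfl) | rfl <;>
    simp [Nat.xor_comm]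

/-- The subgroup of `G` whose coordinates lie in the span of the pair `s`. -/
def span (s : ℕ × ℕ) : Subgroup G where
  carrier := {g | inSpan s (κ.toFun g) = true}
  one_mem' := by simp [inSpan, κ.map_one]
  mul_mem' := by
    intro g h hg hh
    simp only [Set.mem_ofPred_eq, κ.map_mul] at *
    exact inSpan_xor s hg hh
  inv_mem' := by
    intro g hg
    simpa [κ.map_inv] using hg

theorem mem_span {s : ℕ × ℕ} {g : G} : g ∈ κ.span s ↔ inSpan s (κ.toFun g) = true := Iff.rfl

theorem span_ne_bot {s : ℕ × ℕ} (hs : s ∈ lineGens ++ planeGens) : κ.span s ≠ ⊥ := by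
  have key : ∀ s ∈ lineGens ++ planeGens, ∃ x < 8, x ≠ 0 ∧ inSpan s x = true := by decide
  obtain ⟨x, hx, hx0, hsx⟩ := key s hs
  obtain ⟨g, rfl⟩ := κ.surj x hx
  intro h
  have hg : g ∈ κ.span s := hsx
  rw [h, Subgroup.mem_bot] at hg
  exact hx0 (hg ▸ κ.map_one)

theorem span_ne_top {s : ℕ × ℕ} (hs : s ∈ lineGens ++ planeGens) : κ.span s ≠ ⊤ := by
  have key : ∀ s ∈ lineGens ++ planeGens, ∃ x < 8, inSpan s x = false := by decide
  obtain ⟨x, hx, hsx⟩ := key s hs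
  obtain ⟨g, rfl⟩ := κ.surj x hx
  intro h
  have hg : g ∈ κ.span s := h ▸ Subgroup.mem_top g
  rw [mem_span, hsx] at hg
  exact Bool.noConfusion hg

end Coord

/-- Linear maps are additive for bitwise exclusive or. -/
theorem lin_xor (a b d x y : ℕ) : lin a b d (x ^^^ y) = lin a b d x ^^^ lin a b d y := by
  have key : ∀ (p q : Bool) (a : ℕ),
      (bif (p ^^ q) then a else 0) = (bif p then a else 0) ^^^ (bif q then a else 0) := by
    intro p q a
    cases p <;> cases q <;> simp
  simp only [lin, Nat.testBit_xor, key]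
  ac_rfl

theorem lin_lt {a b d : ℕ} (ha : a < 8) (hb : b < 8) (hd : d < 8) (x : ℕ) : lin a b d x < 8 := by
  have key : ∀ (p : Bool) {a : ℕ}, a < 2 ^ 3 → (bif p then a else 0) < 2 ^ 3 := by
    intro p a ha
    cases p <;> simp_all
  exact Nat.xor_lt_two_pow (Nat.xor_lt_two_pow (key _ ha) (key _ hb)) (key _ hd)

/-! ### The labelling of an S-ring -/

section Labelled

variable {G : Type*} [Group G] [Finite G]

/-- `g` and `h` lie in a common basic set. -/
def SRing.Same (A : SRing G) (g h : G) : Prop := ∃ X ∈ A.parts, g ∈ X ∧ h ∈ X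

namespace SRing

variable {A : SRing G}

theorem mem_iff_same {X : Set G} (hX : X ∈ A.parts) {g h : G} (hg : g ∈ X) :
    h ∈ X ↔ A.Same g h := by
  refine ⟨fun hh => ⟨X, hX, hg, hh⟩, ?_⟩
  rintro ⟨Y, hY, hgY, hhY⟩
  rwa [A.eq_of_mem X hX Y hY g hg hgY]

theorem Same.refl (g : G) : A.Same g g := by
  obtain ⟨X, hX, hg⟩ := A.exists_mem g
  exact ⟨X, hX, hg, hg⟩

theorem Same.symm {g h : G} : A.Same g h → A.Same h g := by
  rintro ⟨X, hX, hg, hh⟩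
  exact ⟨X, hX, hh, hg⟩

theorem Same.trans {g h k : G} : A.Same g h → A.Same h k → A.Same g k := by
  rintro ⟨X, hX, hg, hh⟩ hk
  exact ⟨X, hX, hg, (mem_iff_same hX hh).mpr hk⟩

theorem same_one {g : G} : A.Same 1 g ↔ g = 1 := by
  rw [← mem_iff_same A.one_mem rfl]
  exact Set.mem_singleton_iff

/-- The set product of two basic sets is a union of basic sets, since it is the support of their
product in the S-ring. -/
theorem exists_mul_of_same {g h k : G} (hk : A.Same k (g * h)) :
    ∃ u v, A.Same u g ∧ A.Same v h ∧ u * v = k := by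
  obtain ⟨X, hX, hg⟩ := A.exists_mem g
  obtain ⟨Y, hY, hh⟩ := A.exists_mem h
  obtain ⟨Z, hZ, hkZ, hghZ⟩ := hk
  have hconst := A.structConst_const X hX Y hY Z hZ _ hghZ _ hkZ
  have hne : structConst X Y (g * h) ≠ 0 := by
    have : Nonempty {p : G × G // p.1 ∈ X ∧ p.2 ∈ Y ∧ p.1 * p.2 = g * h} :=
      ⟨⟨(g, h), hg, hh, rfl⟩⟩
    exact Nat.card_pos.ne'
  rw [hconst] at hne
  obtain ⟨⟨⟨u, v⟩, hu, hv, huv⟩⟩ : Nonempty {p : G × G // p.1 ∈ X ∧ p.2 ∈ Y ∧ p.1 * p.2 = k} := by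
    by_contra hempty
    rw [not_nonempty_iff] at hempty
    exact hne Nat.card_of_isEmpty
  exact ⟨u, v, ⟨X, hX, hu, hg⟩, ⟨Y, hY, hv, hh⟩, huv⟩

end SRing

/-- The classes of `c`, read through the coordinates `κ`, are the basic sets of `A`. -/
def Labels (A : SRing G) (κ : Coord G) (c : ℕ → ℕ) : Prop :=
  ∀ g h, c (κ.toFun g) = c (κ.toFun h) ↔ A.Same g h

variable {A : SRing G} {κ : Coord G} {c : ℕ → ℕ}

theorem Labels.productsClosed (hc : Labels A κ c) : productsClosed c = true := by
  simp only [SRingPaper.productsClosed, List.all_eq_true, List.any_eq_true, List.mem_range,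
    Bool.or_eq_true, Bool.and_eq_true, beq_iff_eq, Bool.not_eq_true', beq_eq_false_iff_ne]
  intro x hx
  by_cases hcx : c x = x
  swap
  · exact Or.inl (Or.inr hcx)
  refine Or.inr fun y hy => Or.inr fun z hz => or_iff_not_imp_left.mpr fun hcz => ?_
  obtain ⟨g, rfl⟩ := κ.surj x hx
  obtain ⟨h, rfl⟩ := κ.surj y hy
  obtain ⟨k, rfl⟩ := κ.surj z hz
  rw [not_not, ← κ.map_mul, hc] at hcz
  obtain ⟨u, v, hu, hv, rfl⟩ := SRing.exists_mul_of_same hcz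
  refine ⟨κ.toFun u, κ.lt u, ((hc _ _).mpr hu).trans hcx, ?_⟩
  rw [κ.map_mul, ← Nat.xor_assoc, Nat.xor_self, Nat.zero_xor]
  exact (hc _ _).mpr hv

/-- Every S-ring over `C₂³` has a labelling that passes the test: label each element by the least
coordinate in its basic set. -/
theorem exists_labels (A : SRing G) (κ : Coord G) :
    ∃ c, Labels A κ c ∧ labelTest c = true := by
  classical
  let P : ℕ → ℕ → Prop := fun n m => ∃ g h, κ.toFun g = n ∧ κ.toFun h = m ∧ A.Same g h
  have hP : ∀ n < 8, P n n := fun n hn => by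
    obtain ⟨g, hg⟩ := κ.surj n hn
    exact ⟨g, g, hg, hg, SRing.Same.refl g⟩
  let c : ℕ → ℕ := fun n => if hn : n < 8 then Nat.find ⟨n, hP n hn⟩ else n
  have hspec : ∀ n < 8, P n (c n) := fun n hn => by
    simp only [c, dif_pos hn]
    exact Nat.find_spec (p := P n) _
  have hmin : ∀ n < 8, ∀ m, P n m → c n ≤ m := fun n hn m hm => by
    simp only [c, dif_pos hn]
    exact Nat.find_min' (p := P n) _ hm
  have hPκ : ∀ g h, P (κ.toFun g) (κ.toFun h) ↔ A.Same g h := fun g h => by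
    refine ⟨?_, fun hs => ⟨g, h, rfl, rfl, hs⟩⟩
    rintro ⟨g', h', hg, hh, hs⟩
    rwa [κ.inj _ _ hg, κ.inj _ _ hh] at hs
  have hle : ∀ i < 8, c i ≤ i := fun i hi => hmin i hi i (hP i hi)
  have hlab : Labels A κ c := by
    intro g h
    obtain ⟨g', hg'⟩ := κ.surj _ ((hle _ (κ.lt g)).trans_lt (κ.lt g))
    obtain ⟨h', hh'⟩ := κ.surj _ ((hle _ (κ.lt h)).trans_lt (κ.lt h))
    have h1 := hspec _ (κ.lt g)
    have h2 := hspec _ (κ.lt h)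
    rw [← hg', hPκ] at h1
    rw [← hh', hPκ] at h2
    constructor
    · intro heq
      rw [← hg', ← hh'] at heq
      rw [κ.inj _ _ heq] at h1
      exact h1.trans h2.symm
    · intro hs
      refine le_antisymm (hmin _ (κ.lt g) _ ?_) (hmin _ (κ.lt h) _ ?_)
      · rw [← hh', hPκ]
        exact hs.trans h2
      · rw [← hg', hPκ]
        exact hs.symm.trans h1
  have hpos : ∀ i < 8, i ≠ 0 → c i ≠ 0 := by
    intro i hi hi0 hci
    obtain ⟨g, rfl⟩ := κ.surj i hi
    have h1 := hspec _ hi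
    rw [hci, ← κ.map_one, hPκ] at h1
    rw [SRing.same_one.mp h1.symm] at hi0
    exact hi0 κ.map_one
  have hcc : ∀ i < 8, c (c i) = c i := by
    intro i hi
    obtain ⟨g, rfl⟩ := κ.surj i hi
    obtain ⟨g', hg'⟩ := κ.surj _ ((hle _ hi).trans_lt hi)
    have h1 := hspec _ hi
    rw [← hg', hPκ] at h1
    rw [← hg', (hlab g' g).mpr h1.symm, hg']
  obtain ⟨c', hc', htest⟩ := exists_labelTest hpos hle hcc
  refine ⟨c', fun g h => ?_, htest⟩
  rw [hc' _ (κ.lt g), hc' _ (κ.lt h)]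
  exact hlab g h

/-! ### Reading off the conclusion -/

theorem mulRight_mem_autSubgroup (A : SRing G) (g : G) : Equiv.mulRight g ∈ autSubgroup A := by
  intro X _
  ext ⟨a, b⟩
  simp only [mapRel, RSet, Set.mem_image, Set.mem_ofPred_eq, Prod.exists, Prod.mk.injEq,
    Equiv.coe_mulRight]
  constructor
  · rintro ⟨a', b', ⟨x, hx, rfl⟩, rfl, rfl⟩
    exact ⟨x, hx, mul_assoc _ _ _⟩
  · rintro ⟨x, hx, rfl⟩
    exact ⟨a * g⁻¹, x * a * g⁻¹, ⟨x, hx, mul_assoc _ _ _⟩, by simp, by simp⟩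

/-- An automorphism of `G` moving every element within its basic set is an automorphism of `A`. -/
theorem mem_autSubgroup_of_same (A : SRing G) (f : G ≃* G) (hf : ∀ g, A.Same (f g) g) :
    f.toEquiv ∈ autSubgroup A := by
  intro X hX
  have hfX : ∀ g, f g ∈ X ↔ g ∈ X := fun g =>
    ⟨fun h => (SRing.mem_iff_same hX h).mpr (hf g),
      fun h => (SRing.mem_iff_same hX h).mpr (hf g).symm⟩
  ext ⟨a, b⟩
  simp only [mapRel, RSet, Set.mem_image, Set.mem_ofPred_eq, Prod.exists, Prod.mk.injEq,
    MulEquiv.toEquiv_eq_coe, EquivLike.coe_coe]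
  constructor
  · rintro ⟨a', b', ⟨x, hx, rfl⟩, rfl, rfl⟩
    exact ⟨f x, (hfX x).mpr hx, _root_.map_mul f _ _⟩
  · rintro ⟨x, hx, rfl⟩
    refine ⟨f.symm a, f.symm x * f.symm a, ⟨f.symm x, ?_, rfl⟩, by simp, by simp⟩
    rw [← hfX, f.apply_symm_apply]
    exact hx

/-- If any two elements of a basic set are related by an automorphism of `G` preserving all basic
sets, then `A = V(Aut(A), G)`. -/
theorem isSchurian_of_transitive (A : SRing G)
    (h : ∀ g h, A.Same g h → ∃ f : G ≃* G, (∀ k, A.Same (f k) k) ∧ f g = h) : IsSchurian A := by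
  refine ⟨autSubgroup A, mulRight_mem_autSubgroup A, ?_⟩
  have key : ∀ g, ∀ X ∈ A.parts, g ∈ X →
      X = {h : G | ∃ f ∈ autSubgroup A, f 1 = 1 ∧ f g = h} := by
    intro g X hX hg
    ext k
    constructor
    · intro hk
      obtain ⟨f, hf, hfg⟩ := h g k ⟨X, hX, hg, hk⟩
      exact ⟨f.toEquiv, mem_autSubgroup_of_same A f hf, _root_.map_one f, hfg⟩
    · rintro ⟨f, hf, hf1, rfl⟩
      have hmem : (f 1, f g) ∈ RSet X := by
        rw [← hf X hX]
        exact ⟨(1, g), ⟨g, hg, (mul_one g).symm⟩, rfl⟩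
      obtain ⟨x, hx, hfx⟩ := hmem
      simp only [hf1, mul_one] at hfx
      rwa [hfx]
  ext X
  constructor
  · intro hX
    obtain ⟨g, hg⟩ := A.nonempty_mem X hX
    exact ⟨g, key g X hX hg⟩
  · rintro ⟨g, rfl⟩
    obtain ⟨X, hX, hg⟩ := A.exists_mem g
    rwa [← key g X hX hg]

theorem Labels.isSchurian (hc : Labels A κ c) (h : linTransitive c = true) : IsSchurian A := by
  simp only [linTransitive, List.all_eq_true, List.any_eq_true, List.mem_range,
    Bool.or_eq_true, Bool.and_eq_true, beq_iff_eq, Bool.not_eq_true', beq_eq_false_iff_ne] at h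
  refine isSchurian_of_transitive A fun g k hgk => ?_
  obtain ⟨a, ha, -, b, hb, -, d, hd, hgk', hpres⟩ :=
    (h _ (κ.lt g) _ (κ.lt k)).resolve_left (not_not.mpr ((hc g k).mpr hgk))
  choose f hf using fun x : G => κ.surj _ (lin_lt ha hb hd (κ.toFun x))
  have hsame : ∀ x, A.Same (f x) x := fun x => by
    rw [← hc, hf]
    exact hpres _ (κ.lt x)
  let F : G →* G := MonoidHom.mk' f fun x y => κ.inj _ _ (by
    rw [hf, κ.map_mul, κ.map_mul, hf, hf, lin_xor])
  -- The class of `1` is a singleton, so a class-preserving endomorphism has trivial kernel.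
  have hinj : Function.Injective F := by
    rw [injective_iff_map_eq_one]
    intro x hx
    have h1 := hsame x
    rw [show f x = 1 from hx] at h1
    exact SRing.same_one.mp h1
  refine ⟨MulEquiv.ofBijective F (Finite.injective_iff_bijective.mp hinj), hsame, ?_⟩
  exact κ.inj _ _ ((hf g).trans hgk')

theorem Labels.ncard_parts (hc : Labels A κ c) (h : rankTwo c = true) : A.parts.ncard = 2 := by
  simp only [rankTwo, List.all_eq_true, List.mem_range, Bool.or_eq_true, beq_iff_eq] at h
  obtain ⟨g, hg⟩ := κ.surj 1 (by norm_num)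
  have hg1 : g ≠ 1 := by
    rintro rfl
    rw [κ.map_one] at hg
    exact zero_ne_one hg
  have hsame : ∀ k, A.Same g k ↔ k ≠ 1 := by
    intro k
    constructor
    · rintro hs rfl
      exact hg1 (SRing.same_one.mp hs.symm)
    · intro hk
      rw [← hc, hg]
      exact ((h _ (κ.lt k)).resolve_left fun h0 => hk (κ.eq_one h0)).symm
  have hcl : ∀ X ∈ A.parts, g ∈ X → X = {1}ᶜ := fun X hX hgX => by
    ext k
    rw [SRing.mem_iff_same hX hgX, hsame]
    rfl
  have hparts : A.parts = {{1}, {1}ᶜ} := by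
    ext X
    simp only [Set.mem_insert_iff, Set.mem_singleton_iff]
    constructor
    · intro hX
      obtain ⟨k, hk⟩ := A.nonempty_mem X hX
      by_cases hk1 : k = 1
      · exact Or.inl (A.eq_of_mem X hX _ A.one_mem 1 (hk1 ▸ hk) rfl)
      · exact Or.inr (hcl X hX ((SRing.mem_iff_same hX hk).mpr ((hsame k).mpr hk1).symm))
    · rintro (rfl | rfl)
      · exact A.one_mem
      · obtain ⟨X, hX, hgX⟩ := A.exists_mem g
        rwa [← hcl X hX hgX]
  rw [hparts, Set.ncard_pair]
  intro heq
  have : (1 : G) ∈ ({1}ᶜ : Set G) := heq ▸ rfl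
  exact this rfl

theorem Labels.mem_span_iff (hc : Labels A κ c) {s : ℕ × ℕ} (h : spanSaturated c s = true)
    {g k : G} (hgk : A.Same g k) : g ∈ κ.span s ↔ k ∈ κ.span s := by
  simp only [spanSaturated, List.all_eq_true, List.mem_range,
    Bool.or_eq_true, beq_iff_eq, Bool.not_eq_true', beq_eq_false_iff_ne] at h
  rw [κ.mem_span, κ.mem_span, (h _ (κ.lt g) _ (κ.lt k)).resolve_left
    (not_not.mpr ((hc g k).mpr hgk))]

theorem Labels.subset_span (hc : Labels A κ c) {s : ℕ × ℕ} (h : spanSaturated c s = true)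
    {X : Set G} (hX : X ∈ A.parts) {g : G} (hgX : g ∈ X) (hg : g ∈ κ.span s) :
    X ⊆ (κ.span s : Set G) :=
  fun _ hk => (hc.mem_span_iff h ⟨X, hX, hgX, hk⟩).mp hg

theorem Labels.isASubgroup (hc : Labels A κ c) {s : ℕ × ℕ} (h : spanSaturated c s = true) :
    IsASubgroup A (κ.span s) := by
  intro X hX
  by_cases hex : ∃ g ∈ X, g ∈ κ.span s
  · obtain ⟨g, hgX, hg⟩ := hex
    exact Or.inl (hc.subset_span h hX hgX hg)
  · push Not at hex
    exact Or.inr (Set.disjoint_left.mpr hex)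

theorem Labels.tensor (hc : Labels A κ c) (h : isTensor c = true) :
    ∃ G₁ G₂ : Subgroup G, G₁ ≠ ⊥ ∧ G₁ ≠ ⊤ ∧ G₂ ≠ ⊥ ∧ G₂ ≠ ⊤ ∧
       G₁ ⊓ G₂ = ⊥ ∧ G₁ ⊔ G₂ = ⊤ ∧
       ∀ X ∈ A.parts, ∃ X₁ ∈ A.parts, ∃ X₂ ∈ A.parts,
         X₁ ⊆ (G₁ : Set G) ∧ X₂ ⊆ (G₂ : Set G) ∧ X = X₁ * X₂ := by
  simp only [isTensor, List.all_eq_true, List.any_eq_true, List.mem_range,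
    Bool.or_eq_true, Bool.and_eq_true, beq_iff_eq, Bool.not_eq_true'] at h
  obtain ⟨s, hs, hsat_s, t, ht, ⟨⟨hsat_t, hdisj⟩, hspan⟩, hprod⟩ := h
  have hs' : s ∈ lineGens ++ planeGens := List.mem_append_left _ hs
  have ht' : t ∈ lineGens ++ planeGens := List.mem_append_right _ ht
  have hdecomp : ∀ x : G, ∃ y ∈ κ.span s, ∃ z ∈ κ.span t, x = y * z := by
    intro x
    obtain ⟨n, hn, hns, hnt⟩ := hspan _ (κ.lt x)
    obtain ⟨y, rfl⟩ := κ.surj n hn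
    refine ⟨y, hns, y⁻¹ * x, ?_, by simp⟩
    rw [κ.mem_span, κ.map_mul, κ.map_inv, Nat.xor_comm]
    exact hnt
  have hsame : ∀ y ∈ κ.span s, ∀ y' ∈ κ.span s, ∀ z ∈ κ.span t, ∀ z' ∈ κ.span t,
      (A.Same (y * z) (y' * z') ↔ A.Same y y' ∧ A.Same z z') := by
    intro y hy y' hy' z hz z' hz'
    have h1 := (hprod _ (κ.lt y)).resolve_left (by simp [κ.mem_span.mp hy]) _ (κ.lt y')
    have h2 := h1.resolve_left (by simp [κ.mem_span.mp hy']) _ (κ.lt z)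
    have h3 := h2.resolve_left (by simp [κ.mem_span.mp hz]) _ (κ.lt z')
    have h4 := h3.resolve_left (by simp [κ.mem_span.mp hz'])
    rw [Bool.eq_iff_iff, Bool.and_eq_true, beq_iff_eq, beq_iff_eq, beq_iff_eq, ← κ.map_mul,
      ← κ.map_mul, hc, hc, hc] at h4
    exact h4
  refine ⟨κ.span s, κ.span t, κ.span_ne_bot hs', κ.span_ne_top hs', κ.span_ne_bot ht',
    κ.span_ne_top ht', ?_, ?_, ?_⟩
  · rw [eq_bot_iff]
    rintro g ⟨hgs, hgt⟩
    refine κ.eq_one ((hdisj _ (κ.lt g)).resolve_right fun hb => ?_)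
    rw [κ.mem_span.mp hgs, κ.mem_span.mp hgt] at hb
    exact Bool.noConfusion hb
  · rw [eq_top_iff]
    intro x _
    obtain ⟨y, hy, z, hz, rfl⟩ := hdecomp x
    exact Subgroup.mul_mem_sup hy hz
  · intro X hX
    obtain ⟨x, hx⟩ := A.nonempty_mem X hX
    obtain ⟨y, hy, z, hz, rfl⟩ := hdecomp x
    obtain ⟨Y, hY, hyY⟩ := A.exists_mem y
    obtain ⟨Z, hZ, hzZ⟩ := A.exists_mem z
    have hYs := hc.subset_span hsat_s hY hyY hy
    have hZt := hc.subset_span hsat_t hZ hzZ hz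
    refine ⟨Y, hY, Z, hZ, hYs, hZt, ?_⟩
    ext w
    rw [SRing.mem_iff_same hX hx, Set.mem_mul]
    constructor
    · intro hw
      obtain ⟨y', hy', z', hz', rfl⟩ := hdecomp w
      obtain ⟨h1, h2⟩ := (hsame y hy y' hy' z hz z' hz').mp hw
      exact ⟨y', (SRing.mem_iff_same hY hyY).mpr h1, z', (SRing.mem_iff_same hZ hzZ).mpr h2, rfl⟩
    · rintro ⟨v, hvY, w, hwZ, rfl⟩
      exact (hsame y hy v (hYs hvY) z hz w (hZt hwZ)).mpr
        ⟨(SRing.mem_iff_same hY hyY).mp hvY, (SRing.mem_iff_same hZ hzZ).mp hwZ⟩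

/-- Any proper section `U/L` of a group of order 8 with `L ≠ 1` and `U ≠ G` has order at most 2. -/
theorem card_le_two_mul_card (κ : Coord G) {U L : Subgroup G} (hL : L ≠ ⊥) (hU : U ≠ ⊤) :
    Nat.card U ≤ 2 * Nat.card L := by
  have h1 : 1 < Nat.card L := (Subgroup.one_lt_card_iff_ne_bot L).mpr hL
  have h2 : 1 < U.index := by
    have := Subgroup.index_ne_zero_of_finite (H := U)
    have : U.index ≠ 1 := fun h => hU (Subgroup.index_eq_one.mp h)
    omega
  have h3 := U.card_mul_index
  rw [κ.card_eq] at h3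
  nlinarith

theorem Labels.wreath (hc : Labels A κ c) (h : isWreath c = true) :
    ∃ U L : Subgroup G, L ≠ ⊥ ∧ U ≠ ⊤ ∧ IsSWreath A U L ∧ Nat.card U ≤ 2 * Nat.card L := by
  simp only [isWreath, List.all_eq_true, List.any_eq_true, List.mem_range,
    Bool.or_eq_true, Bool.and_eq_true, beq_iff_eq, Bool.not_eq_true'] at h
  obtain ⟨s, hs, hsat_s, t, ht, ⟨hsat_t, hle⟩, hrad⟩ := h
  have hcomm : ∀ x y : G, x * y = y * x := fun x y => κ.inj _ _ (by
    rw [κ.map_mul, κ.map_mul, Nat.xor_comm])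
  refine ⟨κ.span t, κ.span s, κ.span_ne_bot hs, κ.span_ne_top ht,
    ⟨hc.isASubgroup hsat_t, hc.isASubgroup hsat_s, ?_, ?_, ?_⟩,
    card_le_two_mul_card κ (κ.span_ne_bot hs) (κ.span_ne_top ht)⟩
  · intro g hg
    exact (hle _ (κ.lt g)).resolve_left (by simp [κ.mem_span.mp hg])
  · exact ⟨fun n hn g => by rwa [hcomm g n, mul_inv_cancel_right]⟩
  · intro X hX hXU l hl
    have hmul : ∀ l ∈ κ.span s, ∀ x ∈ X, x * l ∈ X := by
      intro l hl x hx
      have hxU : x ∉ κ.span t := fun hxt => hXU (hc.subset_span hsat_t hX hx hxt)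
      have h1 := ((hrad _ (κ.lt x)).resolve_left hxU _ (κ.lt l)).resolve_left
        (by simp [κ.mem_span.mp hl])
      rw [← κ.map_mul, hc] at h1
      exact (SRing.mem_iff_same hX hx).mpr h1.symm
    have himage : (fun x => x * l) '' X = X := by
      ext x
      constructor
      · rintro ⟨y, hy, rfl⟩
        exact hmul l hl y hy
      · intro hx
        exact ⟨x * l⁻¹, hmul _ ((κ.span s).inv_mem hl) x hx, by simp⟩
    refine ⟨?_, himage⟩
    simp only [hcomm l]
    exact himage

end Labelled

end SRingPaper

open SRingPaper in
/-- every S-ring over `C_2 × C_2 × C_2` is schurian, and either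
(1) it has rank 2; (2) it is the tensor product of S-rings over two proper
nontrivial subgroups `G₁, G₂` with `G = G₁ × G₂`; or (3) it is a proper
`S`-wreath product for some section `S = U/L` with `|S| ≤ 2`. -/
theorem sring_over_elementary_two_group
    (G : Type*) [Group G] [Finite G]
    (hG : Nonempty (G ≃* Multiplicative (ZMod 2 × ZMod 2 × ZMod 2)))
    (A : SRing G) :
    IsSchurian A ∧
    (A.parts.ncard = 2 ∨
     (∃ G₁ G₂ : Subgroup G, G₁ ≠ ⊥ ∧ G₁ ≠ ⊤ ∧ G₂ ≠ ⊥ ∧ G₂ ≠ ⊤ ∧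
       G₁ ⊓ G₂ = ⊥ ∧ G₁ ⊔ G₂ = ⊤ ∧
       ∀ X ∈ A.parts, ∃ X₁ ∈ A.parts, ∃ X₂ ∈ A.parts,
         X₁ ⊆ (G₁ : Set G) ∧ X₂ ⊆ (G₂ : Set G) ∧ X = X₁ * X₂) ∨
     (∃ U L : Subgroup G, L ≠ ⊥ ∧ U ≠ ⊤ ∧ IsSWreath A U L ∧
       Nat.card U ≤ 2 * Nat.card L)) := by
  obtain ⟨κ⟩ := exists_coord hG
  obtain ⟨c, hc, htest⟩ := exists_labels A κ
  rw [labelTest, hc.productsClosed, Bool.not_true, Bool.false_or, Bool.and_eq_true,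
    Bool.or_eq_true, Bool.or_eq_true] at htest
  exact ⟨hc.isSchurian htest.1, htest.2.elim
    (fun h => h.elim (fun h => Or.inl (hc.ncard_parts h)) fun h => Or.inr (Or.inl (hc.tensor h)))
    fun h => Or.inr (Or.inr (hc.wreath h))⟩
end
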